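/- For every τ ∈ ℍ and every z ∈ ℂ with z ∉ Λ_τ, the τ-derivative of the Weierstrass zeta function satisfies ∂ζ/∂τ(z|τ) = (i/(4π))[℘′(z|τ) + 2(ζ(z|τ) − zη₁(τ))℘(z|τ) + 2η₁(τ)ζ(z|τ) − (1/6)z g₂(τ)]. -/

import Mathlib

open Complex Filter Topology Asymptotics

noncomputable section

/-- membership in the lattice `Λ_τ = ℤ + τℤ`. -/
def InLattice (τ z : ℂ) : Prop := ∃ m n : ℤ, z = (m : ℂ) + (n : ℂ) * τ

/-- the half-period generators `ω₀ = 0, ω₁ = 1, ω₂ = τ, ω₃ = 1 + τ`. -/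
def halfp (τ : ℂ) : Fin 4 → ℂ := ![0, 1, τ, 1 + τ]

/-- the Weierstrass elliptic function `℘(z|τ)`. -/
def wp (τ z : ℂ) : ℂ :=
  z⁻¹ ^ 2 + ∑' w : {w : ℤ × ℤ // w ≠ 0},
    ((z - ((w.1.1 : ℂ) + (w.1.2 : ℂ) * τ))⁻¹ ^ 2 - ((w.1.1 : ℂ) + (w.1.2 : ℂ) * τ)⁻¹ ^ 2)

/-- `℘′(z|τ)`, the `z`-derivative of `℘`. -/
def wpd (τ z : ℂ) : ℂ := deriv (wp τ) z

/-- `℘″(z|τ)`. -/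
def wpdd (τ z : ℂ) : ℂ := deriv (wpd τ) z

def e1 (τ : ℂ) : ℂ := wp τ (1 / 2)
def e2 (τ : ℂ) : ℂ := wp τ (τ / 2)
def e3 (τ : ℂ) : ℂ := wp τ ((1 + τ) / 2)

def g2 (τ : ℂ) : ℂ := -4 * (e1 τ * e2 τ + e1 τ * e3 τ + e2 τ * e3 τ)

/-- `zeta` is the Weierstrass zeta function: for each `τ ∈ ℍ`, `zeta τ` is odd, satisfies
`∂ζ/∂z = -℘` off the lattice, and `ζ(z|τ) - 1/z → 0` as `z → 0`. -/
def IsWeierstrassZeta (zeta : ℂ → ℂ → ℂ) : Prop :=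
  ∀ τ : ℂ, 0 < τ.im →
    (∀ z : ℂ, zeta τ (-z) = - zeta τ z) ∧
    (∀ z : ℂ, ¬ InLattice τ z → HasDerivAt (zeta τ) (- wp τ z) z) ∧
    Tendsto (fun z => zeta τ z - z⁻¹) (𝓝[≠] (0 : ℂ)) (𝓝 0)

/-- `eta1 τ = ζ(z+1|τ) - ζ(z|τ)` is the first quasi-period. -/
def IsEta1 (zeta : ℂ → ℂ → ℂ) (eta1 : ℂ → ℂ) : Prop :=
  ∀ τ : ℂ, 0 < τ.im → ∀ z : ℂ, ¬ InLattice τ z →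
    eta1 τ = zeta τ (z + 1) - zeta τ z

/-- `eta2 τ = ζ(z+τ|τ) - ζ(z|τ)` is the second quasi-period. -/
def IsEta2 (zeta : ℂ → ℂ → ℂ) (eta2 : ℂ → ℂ) : Prop :=
  ∀ τ : ℂ, 0 < τ.im → ∀ z : ℂ, ¬ InLattice τ z →
    eta2 τ = zeta τ (z + τ) - zeta τ z

/-- `sigma` is the Weierstrass sigma function: entire, odd, with
`∂/∂z log σ = ζ` off the lattice and `σ(z|τ)/z → 1` as `z → 0`. -/
def IsWeierstrassSigma (zeta sigma : ℂ → ℂ → ℂ) : Prop :=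
  ∀ τ : ℂ, 0 < τ.im →
    (∀ z : ℂ, sigma τ (-z) = - sigma τ z) ∧
    Differentiable ℂ (sigma τ) ∧
    (∀ z : ℂ, ¬ InLattice τ z → HasDerivAt (sigma τ) (zeta τ z * sigma τ z) z) ∧
    Tendsto (fun z => sigma τ z / z) (𝓝[≠] (0 : ℂ)) (𝓝 1)

/-- the Hamiltonian system (142) for `(p(τ), A(τ))` on `V`. -/
def HamSystem (n : Fin 4 → ℂ) (zeta : ℂ → ℂ → ℂ) (eta1 : ℂ → ℂ)
    (V : Set ℂ) (p A : ℂ → ℂ) : Prop :=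
  ∀ τ ∈ V,
    HasDerivAt p ((-Complex.I / (4 * (Real.pi : ℂ))) *
      (2 * A τ - zeta τ (2 * p τ) + 2 * p τ * eta1 τ)) τ ∧
    HasDerivAt A ((Complex.I / (4 * (Real.pi : ℂ))) *
      ((2 * wp τ (2 * p τ) + 2 * eta1 τ) * A τ - (3 / 2) * wpd τ (2 * p τ)
        - ∑ k : Fin 4, n k * (n k + 1) * wpd τ (p τ + halfp τ k / 2))) τ

/-- the generalized Lamé potential `I(z;τ)`. -/
def Ipot (n : Fin 4 → ℂ) (zeta : ℂ → ℂ → ℂ) (A B p τ z : ℂ) : ℂ :=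
  (∑ k : Fin 4, n k * (n k + 1) * wp τ (z + halfp τ k / 2))
    + (3 / 4) * (wp τ (z + p) + wp τ (z - p))
    + A * (zeta τ (z + p) - zeta τ (z - p)) + B

end

/-!
The series of `ζ` may be differentiated termwise in `τ`; let `F` be the resulting `τ`-derivative
minus the claimed formula. Off `Λ_τ` it is holomorphic, and it is additively quasi-periodic: `η₁`
is the Eisenstein series `G₂`, the other quasi-period of `ζ` is `τ G₂ - 2πi` by the transformation
law of `G₂` under `τ ↦ -1/τ`, and in differentiating `ζ(z + τ|τ)` in `τ` the extra term
`-℘(z + τ|τ)` is matched by the product `ζ ℘` of the formula. Laurent expansion at `0` gives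
`F(z) = o(z)`. Hence `F` extends to an entire function whose derivative is elliptic, so `F` is
affine in `z`, and therefore zero.

The expansion involves `g₂` as the lattice sum `60 G₄`, which equals `-4 (e₁e₂ + e₁e₃ + e₂e₃)`
because the `e_i` are three distinct roots of `4x³ - g₂x - g₃`. For distinctness: at a half-period
`h` the difference `℘ - ℘(h)` has a double zero, so `(℘(z + h) - ℘(h)) (℘(z) - ℘(h))` extends to an
entire elliptic function, that is, a constant; were `℘` to take the value `℘(h)` at another
half-period, the constant would be `0` and `℘` would be constant.
-/

section EntireExtension

theorem exists_differentiable_forall_tendsto_nhdsNE {E : Type*} [NormedAddCommGroup E]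
    [NormedSpace ℂ E] [CompleteSpace E] {f : ℂ → E}
    (hd : ∀ x, ∀ᶠ z in 𝓝[≠] x, DifferentiableAt ℂ f z)
    (hb : ∀ x, f =O[𝓝[≠] x] fun _ ↦ (1 : ℝ)) :
    ∃ g : ℂ → E, Differentiable ℂ g ∧ ∀ x, Tendsto f (𝓝[≠] x) (𝓝 (g x)) := by
  have hlim (x : ℂ) : ∃ y, Tendsto f (𝓝[≠] x) (𝓝 y) :=
    ⟨_, tendsto_limUnder_of_differentiable_on_punctured_nhds_of_bounded_under (hd x)
      ((isBigO_one_iff ℝ).mp ((hb x).sub (isBigO_const_const (f x) one_ne_zero _)))⟩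
  choose g hg using hlim
  have hfg {z : ℂ} (hz : DifferentiableAt ℂ f z) : f z = g z :=
    tendsto_nhds_unique (hz.continuousAt.tendsto.mono_left nhdsWithin_le_nhds) (hg z)
  refine ⟨g, fun x ↦ (analyticAt_of_differentiable_on_punctured_nhds_of_continuousAt
    ?_ ?_).differentiableAt, hg⟩
  · filter_upwards [eventually_eventually_nhdsWithin.mpr (hd x), hd x, self_mem_nhdsWithin]
      with z hz hfz hzx
    rw [isOpen_compl_singleton.nhdsWithin_eq hzx] at hz
    exact hfz.congr_of_eventuallyEq (hz.mono fun w hw ↦ (hfg hw).symm)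
  · rw [continuousAt_iff_punctured_nhds]
    exact (hg x).congr' ((hd x).mono fun z hz ↦ hfg hz)

lemma eq_add_const_of_tendsto_nhdsNE {M : Type*} [AddMonoid M] [TopologicalSpace M]
    [ContinuousAdd M] [T2Space M] {f g : ℂ → M} {l : ℂ} {c : M}
    (hg : ∀ x, Tendsto f (𝓝[≠] x) (𝓝 (g x))) {x : ℂ}
    (hf : ∀ᶠ z in 𝓝[≠] x, f (z + l) = f z + c) : g (x + l) = g x + c :=
  tendsto_nhds_unique
    (((hg (x + l)).comp ((Homeomorph.addRight l).map_punctured_nhds_eq x).le).congr' hf)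
    ((hg x).add_const c)

end EntireExtension

section QuasiPeriods

/-- The periods `l ∈ Λ` of a function `f` that is additively quasi-periodic off `Λ`, that is,
`f (z + l) - f z` does not depend on `z ∉ Λ`. -/
def quasiPeriods {A M : Type*} [AddCommGroup A] [AddCommGroup M] (Λ : Submodule ℤ A)
    (f : A → M) : Submodule ℤ A :=
  AddSubgroup.toIntSubmodule
    { carrier := {l | l ∈ Λ ∧ ∃ c, ∀ z ∉ Λ, f (z + l) = f z + c}
      zero_mem' := ⟨zero_mem _, 0, by simp⟩
      add_mem' := by
        rintro a b ⟨ha, c, hc⟩ ⟨hb, d, hd⟩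
        refine ⟨add_mem ha hb, c + d, fun z hz ↦ ?_⟩
        rw [← add_assoc, hd _ fun h ↦ hz ((add_mem_cancel_right ha).mp h), hc z hz, add_assoc]
      neg_mem' := by
        rintro a ⟨ha, c, hc⟩
        refine ⟨neg_mem ha, -c, fun z hz ↦ ?_⟩
        have := hc (z + -a) fun h ↦ hz ((add_mem_cancel_right (neg_mem ha)).mp h)
        rw [eq_add_neg_iff_add_eq, ← this, neg_add_cancel_right] }

variable {E : Type*} [NormedAddCommGroup E] [NormedSpace ℂ E] {Λ : Submodule ℤ ℂ}
  [DiscreteTopology Λ]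

lemma eventually_nhdsNE_notMem (Λ : Submodule ℤ ℂ) [DiscreteTopology Λ] (x : ℂ) :
    ∀ᶠ z in 𝓝[≠] x, z ∉ Λ := by
  have h := isClosed_and_discrete_iff.mp ⟨AddSubgroup.isClosed_of_discrete (H := Λ.toAddSubgroup),
    isDiscrete_iff_discreteTopology.mpr ‹_›⟩ x
  exact disjoint_principal_right.mp h

variable [IsZLattice ℝ Λ]

lemma eq_of_differentiable_of_periodic {g : ℂ → E} (hg : Differentiable ℂ g)
    (hper : ∀ z, ∀ l ∈ Λ, g (z + l) = g z) (z w : ℂ) : g z = g w :=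
  hg.apply_eq_apply_of_bounded
    (IsZLattice.isCompact_range_of_periodic Λ g hg.continuous hper).isBounded z w

variable [CompleteSpace E]

theorem exists_eq_smul_add_of_differentiable_of_quasiperiodic {g : ℂ → E}
    (hg : Differentiable ℂ g) (hper : ∀ l ∈ Λ, ∃ c, ∀ z, g (z + l) = g z + c) :
    ∃ a b, ∀ z, g z = z • a + b := by
  have hg' : Differentiable ℂ (deriv g) := fun z ↦ (hg.analyticAt z).deriv.differentiableAt
  have hper' (z l : ℂ) (hl : l ∈ Λ) : deriv g (z + l) = deriv g z := by
    obtain ⟨c, hc⟩ := hper l hl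
    rw [← deriv_comp_add_const, funext hc, deriv_add_const]
  have hconst := eq_of_differentiable_of_periodic (Λ := Λ) hg' hper'
  have hd (z : ℂ) : HasDerivAt (fun z ↦ g z - z • deriv g 0) 0 z := by
    simpa [hconst z 0] using
      (hg z).hasDerivAt.fun_sub ((hasDerivAt_id z).smul_const (deriv g 0))
  refine ⟨deriv g 0, g 0, fun z ↦ ?_⟩
  have := is_const_of_deriv_eq_zero (fun z ↦ (hd z).differentiableAt) (fun z ↦ (hd z).deriv) z 0
  simpa [sub_eq_iff_eq_add'] using this

theorem exists_eq_smul_add_of_le_quasiPeriods {f : ℂ → E}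
    (hf : DifferentiableOn ℂ f (Λ : Set ℂ)ᶜ) (hper : Λ ≤ quasiPeriods Λ f)
    (h0 : f =O[𝓝[≠] 0] fun _ ↦ (1 : ℝ)) : ∃ a b, ∀ z ∉ Λ, f z = z • a + b := by
  have hd (z : ℂ) (hz : z ∉ Λ) : DifferentiableAt ℂ f z :=
    hf.differentiableAt ((AddSubgroup.isClosed_of_discrete
      (H := Λ.toAddSubgroup)).isOpen_compl.mem_nhds hz)
  have hb (x : ℂ) : f =O[𝓝[≠] x] fun _ ↦ (1 : ℝ) := by
    by_cases hx : x ∈ Λ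
    · obtain ⟨-, c, hc⟩ := hper (neg_mem hx)
      have h0x : (fun z ↦ f (z + -x)) =O[𝓝[≠] x] fun _ ↦ (1 : ℝ) :=
        h0.comp_tendsto (((Homeomorph.addRight (-x)).map_punctured_nhds_eq x).le.trans (by simp))
      refine (h0x.sub (isBigO_const_const c one_ne_zero _)).congr' ?_ .rfl
      filter_upwards [eventually_nhdsNE_notMem Λ x] with z hz
      rw [hc z hz, add_sub_cancel_right]
    · exact ((hd x hx).continuousAt.tendsto.mono_left nhdsWithin_le_nhds).isBigO_one ℝ
  obtain ⟨g, hg, hfg⟩ := exists_differentiable_forall_tendsto_nhdsNE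
    (fun x ↦ (eventually_nhdsNE_notMem Λ x).mono hd) hb
  obtain ⟨a, b, hab⟩ := exists_eq_smul_add_of_differentiable_of_quasiperiodic (Λ := Λ) hg
    fun l hl ↦ by
      obtain ⟨-, c, hc⟩ := hper hl
      exact ⟨c, fun x ↦ eq_add_const_of_tendsto_nhdsNE hfg
        ((eventually_nhdsNE_notMem Λ x).mono hc)⟩
  exact ⟨a, b, fun z hz ↦ (tendsto_nhds_unique
    ((hd z hz).continuousAt.tendsto.mono_left nhdsWithin_le_nhds) (hfg z)).trans (hab z)⟩

theorem eq_zero_of_le_quasiPeriods_of_isLittleO {f : ℂ → E}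
    (hf : DifferentiableOn ℂ f (Λ : Set ℂ)ᶜ) (hper : Λ ≤ quasiPeriods Λ f)
    (h0 : f =o[𝓝[≠] 0] fun z ↦ z) {z : ℂ} (hz : z ∉ Λ) : f z = 0 := by
  have hid : Tendsto (fun z : ℂ ↦ z) (𝓝[≠] 0) (𝓝 0) := nhdsWithin_le_nhds
  have hf0 : Tendsto f (𝓝[≠] 0) (𝓝 0) := h0.isBigO.trans_tendsto hid
  obtain ⟨a, b, hab⟩ := exists_eq_smul_add_of_le_quasiPeriods hf hper (hf0.isBigO_one ℝ)
  have hev : f =ᶠ[𝓝[≠] 0] fun z ↦ z • a + b := (eventually_nhdsNE_notMem Λ 0).mono hab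
  have hb : b = 0 := by
    simpa using tendsto_nhds_unique (((hid.smul_const a).add_const b).congr' hev.symm) hf0
  have ha : a = 0 := by
    have h1 := (isBigO_refl (fun z : ℂ ↦ z⁻¹) (𝓝[≠] 0)).smul_isLittleO h0
    suffices (fun _ ↦ a) =o[𝓝[≠] (0 : ℂ)] fun _ ↦ (1 : ℂ) from isLittleO_const_const_iff.mp this
    refine h1.congr' ?_ ?_
    · filter_upwards [hev, self_mem_nhdsWithin] with x hx (hx0 : x ≠ 0)
      rw [hx, hb, add_zero, inv_smul_smul₀ hx0]
    · filter_upwards [self_mem_nhdsWithin] with x (hx0 : x ≠ 0)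
      exact inv_mul_cancel₀ hx0
  rw [hab z hz, ha, hb, smul_zero, add_zero]

end QuasiPeriods

section HalfPeriods

lemma isPreconnected_compl_lattice (L : PeriodPair) : IsPreconnected (L.lattice : Set ℂ)ᶜ :=
  ((Set.countable_coe_iff.mp (countable_of_Lindelof_of_discrete (X := L.lattice))
    ).isPathConnected_compl_of_one_lt_rank (by simp)).isConnected.isPreconnected

variable {L : PeriodPair} {h z : ℂ}

lemma hasDerivAt_weierstrassP (hz : z ∉ L.lattice) :
    HasDerivAt L.weierstrassP (L.derivWeierstrassP z) z := by
  rw [← L.deriv_weierstrassP]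
  exact (L.analyticOnNhd_weierstrassP z hz).differentiableAt.hasDerivAt

lemma tendsto_sq_mul_weierstrassP (L : PeriodPair) :
    Tendsto (fun z ↦ z ^ 2 * L.weierstrassP z) (𝓝[≠] 0) (𝓝 1) := by
  have hcont : ContinuousAt (fun z ↦ z ^ 2 * L.weierstrassPExcept 0 z + 1) 0 := by
    have := (L.analyticAt_weierstrassPExcept 0).continuousAt
    fun_prop
  refine (by simpa using hcont.tendsto.mono_left (nhdsWithin_le_nhds (s := {0}ᶜ)) :
    Tendsto (fun z ↦ z ^ 2 * L.weierstrassPExcept 0 z + 1) (𝓝[≠] 0) (𝓝 1)).congr' ?_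
  filter_upwards [self_mem_nhdsWithin] with z (hz : z ≠ 0)
  rw [← L.weierstrassPExcept_add 0 z]
  simp only [ZeroMemClass.coe_zero, sub_zero]
  field_simp
  simp

lemma derivWeierstrassP_eq_zero_of_add_self_mem (hh : h + h ∈ L.lattice) :
    L.derivWeierstrassP h = 0 := by
  rw [← CharZero.eq_neg_self_iff, ← L.derivWeierstrassP_neg]
  simpa using L.derivWeierstrassP_add_coe (-h) ⟨_, hh⟩

lemma weierstrassP_sub_isBigO (hh : h ∉ L.lattice) (h2 : h + h ∈ L.lattice) :
    (fun z ↦ L.weierstrassP (z + h) - L.weierstrassP h) =O[𝓝 0] fun z ↦ z ^ 2 := by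
  have hana : AnalyticAt ℂ (fun z ↦ L.weierstrassP z - L.weierstrassP h) h :=
    (L.analyticOnNhd_weierstrassP h hh).sub analyticAt_const
  obtain ⟨g, hg, hfg⟩ := (natCast_le_analyticOrderAt hana (n := 2)).mp <| by
    rw [natCast_le_analyticOrderAt_iff_iteratedDeriv_eq_zero hana]
    intro i hi
    interval_cases i
    · simp
    · simp [derivWeierstrassP_eq_zero_of_add_self_mem h2]
  have hO : (fun z ↦ L.weierstrassP z - L.weierstrassP h) =O[𝓝 h] fun z ↦ (z - h) ^ 2 := by
    simpa using ((isBigO_refl (fun z ↦ (z - h) ^ 2) (𝓝 h)).smul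
      (hg.continuousAt.tendsto.isBigO_one ℂ)).congr' (hfg.mono fun z hz ↦ hz.symm) .rfl
  have hlim : Tendsto (· + h) (𝓝 0) (𝓝 h) := by simpa using (continuous_add_const h).tendsto 0
  simpa only [Function.comp_def, add_sub_cancel_right] using hO.comp_tendsto hlim

/-- The product `(℘(z + h) - ℘(h)) (℘(z) - ℘(h))`. When `h` is a half-period, the double zero of
the first factor at `0` cancels the pole of the second, so the product is constant. -/
noncomputable def halfPeriodProduct (L : PeriodPair) (h z : ℂ) : ℂ :=
  (L.weierstrassP (z + h) - L.weierstrassP h) * (L.weierstrassP z - L.weierstrassP h)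

lemma halfPeriodProduct_add_of_mem {l : ℂ} (hl : l ∈ L.lattice) (h z : ℂ) :
    halfPeriodProduct L h (z + l) = halfPeriodProduct L h z := by
  have := L.weierstrassP_add_coe (z + h) ⟨l, hl⟩
  have := L.weierstrassP_add_coe z ⟨l, hl⟩
  simp_all only [halfPeriodProduct, add_right_comm z l h]

lemma halfPeriodProduct_add_self (h2 : h + h ∈ L.lattice) (z : ℂ) :
    halfPeriodProduct L h (z + h) = halfPeriodProduct L h z := by
  have := L.weierstrassP_add_coe z ⟨_, h2⟩
  simp_all only [halfPeriodProduct, add_assoc z h h, mul_comm]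

lemma eventually_notMem_lattice_and_add_notMem (L : PeriodPair) (h x : ℂ) :
    ∀ᶠ z in 𝓝[≠] x, z ∉ L.lattice ∧ z + h ∉ L.lattice :=
  (eventually_nhdsNE_notMem L.lattice x).and
    (((Homeomorph.addRight h).map_punctured_nhds_eq x).le
      (eventually_nhdsNE_notMem L.lattice (x + h)))

lemma differentiableAt_halfPeriodProduct (hz : z ∉ L.lattice) (hzh : z + h ∉ L.lattice) :
    DifferentiableAt ℂ (halfPeriodProduct L h) z :=
  (((hasDerivAt_weierstrassP hzh).comp_add_const z h).differentiableAt.sub_const _).mul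
    ((hasDerivAt_weierstrassP hz).differentiableAt.sub_const _)

lemma halfPeriodProduct_isBigO_zero (hh : h ∉ L.lattice) (h2 : h + h ∈ L.lattice) :
    halfPeriodProduct L h =O[𝓝[≠] 0] fun _ ↦ (1 : ℝ) := by
  have hlim : Tendsto (fun z ↦ z ^ 2 * (L.weierstrassP z - L.weierstrassP h)) (𝓝[≠] 0)
      (𝓝 (1 - 0 ^ 2 * L.weierstrassP h)) := by
    simp only [mul_sub]
    exact (tendsto_sq_mul_weierstrassP L).sub
      (((continuous_pow 2).mul_const _).tendsto 0 |>.mono_left nhdsWithin_le_nhds)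
  exact (((weierstrassP_sub_isBigO hh h2).mono nhdsWithin_le_nhds).mul (isBigO_refl _ _)).trans
    (hlim.isBigO_one ℝ)

lemma halfPeriodProduct_isBigO (hh : h ∉ L.lattice) (h2 : h + h ∈ L.lattice) (x : ℂ) :
    halfPeriodProduct L h =O[𝓝[≠] x] fun _ ↦ (1 : ℝ) := by
  have htrans {l : ℂ} (hl : ∀ z, halfPeriodProduct L h (z + l) = halfPeriodProduct L h z)
      (hxl : x + l = 0) : halfPeriodProduct L h =O[𝓝[≠] x] fun _ ↦ (1 : ℝ) := by
    refine ((halfPeriodProduct_isBigO_zero hh h2).comp_tendsto (k := (· + l)) ?_).congr_left hl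
    exact ((Homeomorph.addRight l).map_punctured_nhds_eq x).le.trans (by simp [hxl])
  by_cases hx : x ∈ L.lattice
  · exact htrans (halfPeriodProduct_add_of_mem (neg_mem hx) h) (add_neg_cancel x)
  by_cases hxh : x + h ∈ L.lattice
  · refine htrans (l := h + -(x + h)) (fun z ↦ ?_) (by ring)
    rw [← add_assoc, halfPeriodProduct_add_of_mem (neg_mem hxh), halfPeriodProduct_add_self h2]
  · exact ((differentiableAt_halfPeriodProduct hx hxh).continuousAt.tendsto.mono_left
      nhdsWithin_le_nhds).isBigO_one ℝ

theorem exists_halfPeriodProduct_eq (hh : h ∉ L.lattice) (h2 : h + h ∈ L.lattice) :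
    ∃ c, ∀ z ∉ L.lattice, z + h ∉ L.lattice → halfPeriodProduct L h z = c := by
  obtain ⟨g, hg, hfg⟩ := exists_differentiable_forall_tendsto_nhdsNE
    (fun x ↦ (eventually_notMem_lattice_and_add_notMem L h x).mono
      fun z hz ↦ differentiableAt_halfPeriodProduct hz.1 hz.2)
    (halfPeriodProduct_isBigO hh h2)
  have hper (z l : ℂ) (hl : l ∈ L.lattice) : g (z + l) = g z := by
    simpa using eq_add_const_of_tendsto_nhdsNE (c := 0) hfg
      (.of_forall fun z ↦ by rw [halfPeriodProduct_add_of_mem hl, add_zero])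
  refine ⟨g 0, fun z hz hzh ↦ ?_⟩
  rw [← eq_of_differentiable_of_periodic hg hper z 0]
  exact tendsto_nhds_unique ((differentiableAt_halfPeriodProduct hz
    hzh).continuousAt.tendsto.mono_left nhdsWithin_le_nhds) (hfg z)

lemma eventually_weierstrassP_ne (L : PeriodPair) (e : ℂ) :
    ∀ᶠ z in 𝓝[≠] 0, L.weierstrassP z ≠ e :=
  (tendsto_cobounded_of_meromorphicOrderAt_neg (by
    rw [L.order_weierstrassP 0 (zero_mem _)]; decide)).eventually_ne_cobounded e

lemma not_frequently_weierstrassP_eq (hz : z ∉ L.lattice) (e : ℂ) :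
    ¬ ∃ᶠ w in 𝓝[≠] z, L.weierstrassP w = e := by
  intro hfreq
  have hconst := L.analyticOnNhd_weierstrassP.eqOn_of_preconnected_of_frequently_eq
    analyticOnNhd_const (isPreconnected_compl_lattice L) hz hfreq
  obtain ⟨w, hw, hwL⟩ :=
    ((eventually_weierstrassP_ne L e).and (eventually_nhdsNE_notMem L.lattice 0)).exists
  exact hw (hconst hwL)

theorem weierstrassP_ne_of_half_period {u : ℂ} (hh : h ∉ L.lattice) (h2 : h + h ∈ L.lattice)
    (hu : u ∉ L.lattice) (huh : u + h ∉ L.lattice) : L.weierstrassP u ≠ L.weierstrassP h := by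
  intro hue
  obtain ⟨c, hc⟩ := exists_halfPeriodProduct_eq hh h2
  obtain rfl : c = 0 := by rw [← hc u hu huh, halfPeriodProduct, hue, sub_self, mul_zero]
  have hev : ∀ᶠ z in 𝓝[≠] 0, L.weierstrassP (z + h) = L.weierstrassP h := by
    filter_upwards [eventually_weierstrassP_ne L (L.weierstrassP h),
      eventually_notMem_lattice_and_add_notMem L h 0] with z hz hzL
    exact sub_eq_zero.mp
      ((mul_eq_zero.mp (hc z hzL.1 hzL.2)).resolve_right (sub_ne_zero.mpr hz))
  refine not_frequently_weierstrassP_eq hh (L.weierstrassP h) (Eventually.frequently ?_)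
  have hmap : map (· + h) (𝓝[≠] 0) = 𝓝[≠] h := by
    simp
  rw [← hmap]
  exact hev

lemma four_mul_weierstrassP_pow_three_sub (hh : h ∉ L.lattice) (h2 : h + h ∈ L.lattice) :
    4 * L.weierstrassP h ^ 3 - L.g₂ * L.weierstrassP h - L.g₃ = 0 := by
  rw [← L.derivWeierstrassP_sq h hh, derivWeierstrassP_eq_zero_of_add_self_mem h2,
    zero_pow two_ne_zero]

lemma eq_neg_four_mul_of_roots {K : Type*} [Field K] [CharZero K] {x y z a b : K} (hxy : x ≠ y)
    (hxz : x ≠ z) (hyz : y ≠ z) (hx : 4 * x ^ 3 - a * x - b = 0)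
    (hy : 4 * y ^ 3 - a * y - b = 0) (hz : 4 * z ^ 3 - a * z - b = 0) :
    a = -4 * (x * y + x * z + y * z) := by
  have h1 : 4 * (x ^ 2 + x * y + y ^ 2) = a :=
    mul_left_cancel₀ (sub_ne_zero.mpr hxy) (by linear_combination hx - hy)
  have h2 : 4 * (x ^ 2 + x * z + z ^ 2) = a :=
    mul_left_cancel₀ (sub_ne_zero.mpr hxz) (by linear_combination hx - hz)
  have h3 : x + y + z = 0 :=
    mul_left_cancel₀ (sub_ne_zero.mpr hyz) (by linear_combination (h1 - h2) / 4)
  linear_combination -h1 + 4 * (x + y) * h3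

theorem g₂_eq_neg_four_mul (L : PeriodPair) :
    L.g₂ = -4 * (L.weierstrassP (L.ω₁ / 2) * L.weierstrassP (L.ω₂ / 2)
      + L.weierstrassP (L.ω₁ / 2) * L.weierstrassP ((L.ω₁ + L.ω₂) / 2)
      + L.weierstrassP (L.ω₂ / 2) * L.weierstrassP ((L.ω₁ + L.ω₂) / 2)) := by
  have notMem {u : ℂ} (α β : ℚ) (hu : u = α * L.ω₁ + β * L.ω₂) (hαβ : α.den ≠ 1 ∨ β.den ≠ 1) :
      u ∉ L.lattice := by
    rw [hu, L.mul_ω₁_add_mul_ω₂_mem_lattice]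
    tauto
  have n1 := L.ω₁_div_two_notMem_lattice
  have n2 := L.ω₂_div_two_notMem_lattice
  have n3 : (L.ω₁ + L.ω₂) / 2 ∉ L.lattice :=
    notMem (1 / 2) (1 / 2) (by push_cast; ring) (by norm_num)
  have p1 : L.ω₁ / 2 + L.ω₁ / 2 ∈ L.lattice := by simp [L.ω₁_mem_lattice]
  have p2 : L.ω₂ / 2 + L.ω₂ / 2 ∈ L.lattice := by simp [L.ω₂_mem_lattice]
  have p3 : (L.ω₁ + L.ω₂) / 2 + (L.ω₁ + L.ω₂) / 2 ∈ L.lattice := by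
    rw [add_halves]
    exact add_mem L.ω₁_mem_lattice L.ω₂_mem_lattice
  refine eq_neg_four_mul_of_roots (weierstrassP_ne_of_half_period n2 p2 n1 ?_)
    (weierstrassP_ne_of_half_period n3 p3 n1 ?_) (weierstrassP_ne_of_half_period n3 p3 n2 ?_)
    (four_mul_weierstrassP_pow_three_sub n1 p1) (four_mul_weierstrassP_pow_three_sub n2 p2)
    (four_mul_weierstrassP_pow_three_sub n3 p3)
  · exact notMem (1 / 2) (1 / 2) (by push_cast; ring) (by norm_num)
  · exact notMem 1 (1 / 2) (by push_cast; ring) (by norm_num)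
  · exact notMem (1 / 2) 1 (by push_cast; ring) (by norm_num)

end HalfPeriods

open scoped UpperHalfPlane

section LatticePoints

/-- The period pair `(1, τ)`, whose lattice is `ℤ + τℤ`. -/
noncomputable def periodPair (τ : ℍ) : PeriodPair where
  ω₁ := 1
  ω₂ := τ
  indep := LinearIndependent.pair_iff.mpr fun s t hst ↦ by
    have ht : t = 0 := by simpa [τ.im_ne_zero] using congrArg Complex.im hst
    exact ⟨by simpa [ht] using hst, ht⟩

/-- The element `m + nτ` of `ℤ + τℤ` with coordinates `(m, n)`. It is defined for every `τ : ℂ`, so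
that it can be differentiated in `τ`. -/
def latticePoint (τ : ℂ) (p : ℤ × ℤ) : ℂ := p.1 + p.2 * τ

variable {τ : ℍ} {z : ℂ}

lemma inLattice_iff_mem_lattice : InLattice τ z ↔ z ∈ (periodPair τ).lattice := by
  simp [PeriodPair.mem_lattice, periodPair, InLattice, eq_comm]

lemma mem_lattice_iff_exists_latticePoint :
    z ∈ (periodPair τ).lattice ↔ ∃ p, latticePoint τ p = z := by
  simp [PeriodPair.mem_lattice, periodPair, latticePoint]

lemma latticePoint_mem_lattice (τ : ℍ) (p : ℤ × ℤ) : latticePoint τ p ∈ (periodPair τ).lattice :=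
  mem_lattice_iff_exists_latticePoint.mpr ⟨p, rfl⟩

lemma latticePoint_ne (hz : z ∉ (periodPair τ).lattice) (p : ℤ × ℤ) : latticePoint τ p ≠ z :=
  fun h ↦ hz (h ▸ latticePoint_mem_lattice τ p)

lemma norm_vec_eq_norm_pair (a b : ℤ) : ‖![a, b]‖ = ‖(a, b)‖ := by
  simp [EisensteinSeries.norm_eq_max_natAbs, Prod.norm_def, Int.norm_eq_abs, Nat.cast_natAbs]

lemma summable_norm_pow_three_inv :
    Summable fun p : {p : ℤ × ℤ // p ≠ 0} ↦ (‖p.1‖ ^ 3)⁻¹ := by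
  have h := (finTwoArrowEquiv ℤ).symm.summable_iff.mpr
    (EisensteinSeries.summable_one_div_norm_rpow (k := 3) (by norm_num))
  suffices Summable fun p : ℤ × ℤ ↦ (‖p‖ ^ 3)⁻¹ from this.comp_injective Subtype.val_injective
  refine h.congr fun p ↦ ?_
  have hp : ‖(finTwoArrowEquiv ℤ).symm p‖ = ‖p‖ := norm_vec_eq_norm_pair p.1 p.2
  rw [Function.comp_apply, hp, Real.rpow_neg (norm_nonneg _)]
  norm_cast

lemma isBigO_latticePoint (τ : ℍ) :
    (fun p : ℤ × ℤ ↦ p) =O[⊤] latticePoint τ := by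
  have hr := EisensteinSeries.r_pos τ
  refine IsBigO.of_bound (EisensteinSeries.r τ)⁻¹ (.of_forall fun p ↦ ?_)
  rw [le_inv_mul_iff₀ hr]
  by_cases hp : p = 0
  · simp [hp]
  have hne : ![p.2, p.1] ≠ 0 := by
    contrapose! hp
    exact Prod.ext (congrFun hp 1) (congrFun hp 0)
  simpa [EisensteinSeries.norm_symm p.2, norm_vec_eq_norm_pair, latticePoint, add_comm] using
    EisensteinSeries.r_mul_max_le τ hne

lemma latticePoint_ne_zero (τ : ℍ) {p : ℤ × ℤ} (hp : p ≠ 0) : latticePoint τ p ≠ 0 := by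
  intro h
  obtain ⟨c, hc⟩ := (isBigO_latticePoint τ).bound
  simpa [h, hp] using eventually_top.mp hc p

lemma exists_mul_norm_le_norm_sub_latticePoint (hz : ∀ p ≠ 0, latticePoint τ p ≠ z) :
    ∃ c > 0, ∀ p ≠ 0, c * ‖p‖ ≤ ‖z - latticePoint τ p‖ := by
  have hp := (isBigO_latticePoint τ).mono (show cofinite ≤ ⊤ from le_top)
  have hnorm : Tendsto (fun p : ℤ × ℤ ↦ ‖p‖) cofinite atTop := by
    rw [← cocompact_eq_cofinite]
    exact tendsto_norm_cocompact_atTop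
  have hz' : (fun _ ↦ z) =o[cofinite] latticePoint τ :=
    (isLittleO_const_left.mpr (.inr hnorm)).trans_isBigO hp
  obtain ⟨C, hC, h⟩ := bound_of_isBigO_cofinite (hp.trans hz'.right_isBigO_sub)
  refine ⟨C⁻¹, inv_pos.mpr hC, fun p hp ↦ ?_⟩
  rw [inv_mul_le_iff₀ hC, norm_sub_rev]
  exact h (sub_ne_zero.mpr (hz p hp))

lemma one_le_norm_of_ne_zero {p : ℤ × ℤ} (hp : p ≠ 0) : 1 ≤ ‖p‖ := by
  rw [Prod.norm_def, le_max_iff]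
  by_contra! h
  simp only [Int.norm_eq_abs] at h
  norm_cast at h
  exact hp (Prod.ext (Int.abs_lt_one_iff.mp h.1) (Int.abs_lt_one_iff.mp h.2))

lemma norm_intCast_snd_le (p : ℤ × ℤ) : ‖(p.2 : ℂ)‖ ≤ ‖p‖ := by
  rw [Complex.norm_intCast, ← Int.norm_eq_abs]
  exact norm_snd_le p

lemma exists_eventually_mul_norm_le_norm_sub_latticePoint
    (hz : ∀ p ≠ 0, latticePoint τ p ≠ z) :
    ∃ c > 0, ∀ᶠ q in 𝓝 ((τ : ℂ), z), ∀ p ≠ 0, c * ‖p‖ ≤ ‖q.2 - latticePoint q.1 p‖ := by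
  obtain ⟨c, hc, h⟩ := exists_mul_norm_le_norm_sub_latticePoint hz
  refine ⟨c / 2, by positivity, ?_⟩
  filter_upwards [Metric.closedBall_mem_nhds ((τ : ℂ), z) (show 0 < c / 4 by positivity)]
    with q hq p hp
  rw [mem_closedBall_iff_norm', Prod.norm_def, max_le_iff] at hq
  have hdiff : ‖(z - latticePoint τ p) - (q.2 - latticePoint q.1 p)‖ ≤ c / 2 * ‖p‖ := calc
    _ = ‖(z - q.2) - p.2 * (τ - q.1)‖ := by simp only [latticePoint]; ring_nf
    _ ≤ ‖z - q.2‖ + ‖(p.2 : ℂ)‖ * ‖τ - q.1‖ := (norm_sub_le _ _).trans_eq (by rw [norm_mul])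
    _ ≤ c / 4 * ‖p‖ + ‖p‖ * (c / 4) := by
      gcongr
      · exact hq.2.trans (le_mul_of_one_le_right (by positivity) (one_le_norm_of_ne_zero hp))
      · exact norm_intCast_snd_le p
      · exact hq.1
    _ = c / 2 * ‖p‖ := by ring
  have := norm_sub_norm_le (z - latticePoint τ p) (q.2 - latticePoint q.1 p)
  linarith [h p hp]

lemma exists_eventually_mul_norm_le (hz : ∀ p ≠ 0, latticePoint τ p ≠ z) :
    ∃ c > 0, ∀ᶠ q in 𝓝 ((τ : ℂ), z), ∀ p ≠ 0,
      c * ‖p‖ ≤ ‖latticePoint q.1 p‖ ∧ c * ‖p‖ ≤ ‖q.2 - latticePoint q.1 p‖ := by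
  obtain ⟨c, hc, h⟩ := exists_eventually_mul_norm_le_norm_sub_latticePoint hz
  obtain ⟨d, hd, h'⟩ := exists_eventually_mul_norm_le_norm_sub_latticePoint (τ := τ) (z := 0)
    fun p hp ↦ latticePoint_ne_zero τ hp
  have hfst : Tendsto (fun q : ℂ × ℂ ↦ (q.1, (0 : ℂ))) (𝓝 ((τ : ℂ), z)) (𝓝 ((τ : ℂ), 0)) :=
    (continuous_fst.prodMk continuous_const).tendsto _
  refine ⟨min c d, lt_min hc hd, ?_⟩
  filter_upwards [h, hfst.eventually h'] with q hq hq' p hp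
  have hq'' := hq' p hp
  rw [zero_sub, norm_neg] at hq''
  exact ⟨le_trans (by gcongr; exact min_le_right c d) hq'',
    le_trans (by gcongr; exact min_le_left c d) (hq p hp)⟩

end LatticePoints

section ZetaTerm

/-- The summand of the Weierstrass zeta function attached to the lattice point `ω ≠ 0`. -/
noncomputable def zetaTerm (ω z : ℂ) : ℂ := (z - ω)⁻¹ + ω⁻¹ + z * ω⁻¹ ^ 2

/-- The derivative of `zetaTerm` with respect to the lattice point. -/
noncomputable def zetaTermDeriv (ω z : ℂ) : ℂ := (z - ω)⁻¹ ^ 2 - ω⁻¹ ^ 2 - 2 * z * ω⁻¹ ^ 3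

variable {ω z : ℂ} {r : ℝ}

lemma norm_zetaTerm_le (hr : 0 < r) (hω : r ≤ ‖ω‖) (hzω : r ≤ ‖z - ω‖) :
    ‖zetaTerm ω z‖ ≤ ‖z‖ ^ 2 / r ^ 3 := by
  have h1 : ω ≠ 0 := norm_pos_iff.mp (hr.trans_le hω)
  have h2 : z - ω ≠ 0 := norm_pos_iff.mp (hr.trans_le hzω)
  calc ‖zetaTerm ω z‖ = ‖z ^ 2 / (ω ^ 2 * (z - ω))‖ := by
        rw [zetaTerm]; congr 1; field_simp; ring
    _ = ‖z‖ ^ 2 / (‖ω‖ ^ 2 * ‖z - ω‖) := by simp only [norm_div, norm_mul, norm_pow]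
    _ ≤ ‖z‖ ^ 2 / (r ^ 2 * r) := by gcongr
    _ = ‖z‖ ^ 2 / r ^ 3 := by rw [pow_succ r 2]

lemma norm_inv_sq_sub_inv_sq_le (hr : 0 < r) (hω : r ≤ ‖ω‖) (hzω : r ≤ ‖z - ω‖) :
    ‖(z - ω)⁻¹ ^ 2 - ω⁻¹ ^ 2‖ ≤ 2 * ‖z‖ / r ^ 3 := by
  have h1 : ω ≠ 0 := norm_pos_iff.mp (hr.trans_le hω)
  have h2 : z - ω ≠ 0 := norm_pos_iff.mp (hr.trans_le hzω)
  calc ‖(z - ω)⁻¹ ^ 2 - ω⁻¹ ^ 2‖ = ‖z / (ω * (z - ω) ^ 2) - z / (ω ^ 2 * (z - ω))‖ := by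
        congr 1; field_simp; ring
    _ ≤ ‖z‖ / (‖ω‖ * ‖z - ω‖ ^ 2) + ‖z‖ / (‖ω‖ ^ 2 * ‖z - ω‖) :=
      (norm_sub_le _ _).trans_eq (by simp only [norm_div, norm_mul, norm_pow])
    _ ≤ ‖z‖ / (r * r ^ 2) + ‖z‖ / (r ^ 2 * r) := by gcongr
    _ = 2 * ‖z‖ / r ^ 3 := by field_simp; ring

lemma norm_zetaTermDeriv_le (hr : 0 < r) (hω : r ≤ ‖ω‖) (hzω : r ≤ ‖z - ω‖) :
    ‖zetaTermDeriv ω z‖ ≤ 3 * ‖z‖ ^ 2 / r ^ 4 := by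
  have h1 : ω ≠ 0 := norm_pos_iff.mp (hr.trans_le hω)
  have h2 : z - ω ≠ 0 := norm_pos_iff.mp (hr.trans_le hzω)
  calc ‖zetaTermDeriv ω z‖
      = ‖z ^ 2 / (ω ^ 2 * (z - ω) ^ 2) - 2 * (z ^ 2 / (ω ^ 3 * (z - ω)))‖ := by
        rw [zetaTermDeriv]; congr 1; field_simp; ring
    _ ≤ ‖z‖ ^ 2 / (‖ω‖ ^ 2 * ‖z - ω‖ ^ 2) + 2 * (‖z‖ ^ 2 / (‖ω‖ ^ 3 * ‖z - ω‖)) :=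
      (norm_sub_le _ _).trans_eq (by
        simp only [norm_div, norm_mul, norm_pow, Complex.norm_ofNat])
    _ ≤ ‖z‖ ^ 2 / (r ^ 2 * r ^ 2) + 2 * (‖z‖ ^ 2 / (r ^ 3 * r)) := by gcongr
    _ = 3 * ‖z‖ ^ 2 / r ^ 4 := by field_simp; ring

lemma hasFDerivAt_zetaTerm {E : Type*} [NormedAddCommGroup E] [NormedSpace ℂ E] {f g : E → ℂ}
    {f' g' : E →L[ℂ] ℂ} {x : E} (hf : HasFDerivAt f f' x) (hg : HasFDerivAt g g' x)
    (h0 : f x ≠ 0) (h1 : g x - f x ≠ 0) :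
    HasFDerivAt (fun x ↦ zetaTerm (f x) (g x))
      (zetaTermDeriv (f x) (g x) • f' - ((g x - f x)⁻¹ ^ 2 - (f x)⁻¹ ^ 2) • g') x := by
  have hinv := (hasDerivAt_inv h0).comp_hasFDerivAt x hf
  have hsub := (hasDerivAt_inv h1).comp_hasFDerivAt x (hg.fun_sub hf)
  refine ((hsub.add hinv).add (hg.mul (hinv.pow 2))).congr_fderiv ?_
  ext v
  simp only [Function.comp_apply, Nat.add_one_sub_one, pow_one, nsmul_eq_mul, Nat.cast_ofNat,
    inv_pow, add_apply, smul_apply, sub_apply, smul_eq_mul, neg_mul, mul_neg, zetaTermDeriv]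
  field_simp
  ring

end ZetaTerm

section ZetaSeries

/-- The regular part at `0` of the Weierstrass zeta function of `ℤ + τℤ`. -/
noncomputable def zetaReg (τ z : ℂ) : ℂ :=
  ∑' p : {p : ℤ × ℤ // p ≠ 0}, zetaTerm (latticePoint τ p) z

/-- The termwise `τ`-derivative of the Weierstrass zeta function of `ℤ + τℤ`. -/
noncomputable def zetaTau (τ z : ℂ) : ℂ :=
  ∑' p : {p : ℤ × ℤ // p ≠ 0}, p.1.2 * zetaTermDeriv (latticePoint τ p) z

/-- The Weierstrass zeta function of `ℤ + τℤ`, as a series. -/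
noncomputable def zetaSeries (τ z : ℂ) : ℂ := z⁻¹ + zetaReg τ z

lemma zetaReg_zero (τ : ℂ) : zetaReg τ 0 = 0 := by
  simp [zetaReg, zetaTerm]

lemma hasSum_weierstrassPExcept_zero (τ : ℍ) (z : ℂ) :
    HasSum (fun p : {p : ℤ × ℤ // p ≠ 0} ↦
      (z - latticePoint τ p)⁻¹ ^ 2 - (latticePoint τ p)⁻¹ ^ 2)
      ((periodPair τ).weierstrassPExcept 0 z) := by
  set L := periodPair τ
  have h := L.hasSum_weierstrassPExcept 0 z
  rw [← L.latticeEquivProd.symm.toEquiv.hasSum_iff] at h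
  refine (hasSum_subtype_iff_indicator (s := {p : ℤ × ℤ | p ≠ 0}) (f := fun p ↦
    (z - latticePoint τ p)⁻¹ ^ 2 - (latticePoint τ p)⁻¹ ^ 2)).mpr (h.congr_fun fun p ↦ ?_)
  have hp : (L.latticeEquivProd.symm p).1 = latticePoint τ p := by
    rw [L.latticeEquiv_symm_apply]
    simp [L, periodPair, latticePoint]
  by_cases h0 : p = 0
  · simp [h0]
  · simp [h0, Set.indicator, hp]

lemma wp_eq_add (τ : ℍ) (z : ℂ) :
    wp τ z = z⁻¹ ^ 2 + (periodPair τ).weierstrassPExcept 0 z :=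
  congrArg (z⁻¹ ^ 2 + ·) (hasSum_weierstrassPExcept_zero τ z).tsum_eq

lemma wp_eq_weierstrassP (τ : ℍ) : wp τ = (periodPair τ).weierstrassP := by
  ext z
  rw [wp_eq_add, ← (periodPair τ).weierstrassPExcept_add 0 z]
  simp [add_comm]

lemma wpd_eq_derivWeierstrassP (τ : ℍ) : wpd τ = (periodPair τ).derivWeierstrassP := by
  ext z
  rw [wpd, wp_eq_weierstrassP, PeriodPair.deriv_weierstrassP]

lemma g2_eq_g₂ (τ : ℍ) : g2 τ = (periodPair τ).g₂ := by
  rw [g2, e1, e2, e3, wp_eq_weierstrassP, g₂_eq_neg_four_mul]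
  rfl

variable {τ : ℍ} {z : ℂ}

lemma norm_snd_mul_zetaTermDeriv_le {p : ℤ × ℤ} {ω : ℂ} {c : ℝ} (hp : p ≠ 0) (hc : 0 < c)
    (hω : c * ‖p‖ ≤ ‖ω‖) (hzω : c * ‖p‖ ≤ ‖z - ω‖) :
    ‖p.2 * zetaTermDeriv ω z‖ ≤ 3 * ‖z‖ ^ 2 / c ^ 4 * (‖p‖ ^ 3)⁻¹ := by
  have hp' := norm_pos_iff.mpr hp
  calc ‖p.2 * zetaTermDeriv ω z‖ = ‖(p.2 : ℂ)‖ * ‖zetaTermDeriv ω z‖ := norm_mul _ _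
    _ ≤ ‖p‖ * (3 * ‖z‖ ^ 2 / (c * ‖p‖) ^ 4) := by
      gcongr
      · exact norm_intCast_snd_le p
      · exact norm_zetaTermDeriv_le (mul_pos hc hp') hω hzω
    _ = 3 * ‖z‖ ^ 2 / c ^ 4 * (‖p‖ ^ 3)⁻¹ := by field_simp

lemma summable_zetaTerm (hz : ∀ p ≠ 0, latticePoint τ p ≠ z) :
    Summable fun p : {p : ℤ × ℤ // p ≠ 0} ↦ zetaTerm (latticePoint τ p) z := by
  obtain ⟨c, hc, h⟩ := exists_eventually_mul_norm_le hz
  refine .of_norm_bounded (summable_norm_pow_three_inv.mul_left (‖z‖ ^ 2 / c ^ 3)) fun p ↦ ?_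
  obtain ⟨h1, h2⟩ := h.self_of_nhds p p.2
  refine (norm_zetaTerm_le (mul_pos hc (norm_pos_iff.mpr p.2)) h1 h2).trans_eq ?_
  rw [mul_pow, ← div_div, div_eq_mul_inv _ (‖p.1‖ ^ 3)]

lemma summable_snd_mul_zetaTermDeriv (hz : ∀ p ≠ 0, latticePoint τ p ≠ z) :
    Summable fun p : {p : ℤ × ℤ // p ≠ 0} ↦ p.1.2 * zetaTermDeriv (latticePoint τ p) z := by
  obtain ⟨c, hc, h⟩ := exists_eventually_mul_norm_le hz
  refine .of_norm_bounded (summable_norm_pow_three_inv.mul_left (3 * ‖z‖ ^ 2 / c ^ 4)) fun p ↦ ?_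
  obtain ⟨h1, h2⟩ := h.self_of_nhds p p.2
  exact norm_snd_mul_zetaTermDeriv_le p.2 hc h1 h2

/-- The differential in `(τ, z)` of the summand of `zetaReg` with index `p`. -/
noncomputable def zetaTermFDeriv (p : ℤ × ℤ) (q : ℂ × ℂ) : ℂ × ℂ →L[ℂ] ℂ :=
  (p.2 * zetaTermDeriv (latticePoint q.1 p) q.2) • .fst ℂ ℂ ℂ -
    ((q.2 - latticePoint q.1 p)⁻¹ ^ 2 - (latticePoint q.1 p)⁻¹ ^ 2) • .snd ℂ ℂ ℂ

lemma hasFDerivAt_zetaTerm_latticePoint {p : ℤ × ℤ} {q : ℂ × ℂ} (h0 : latticePoint q.1 p ≠ 0)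
    (h1 : q.2 - latticePoint q.1 p ≠ 0) :
    HasFDerivAt (fun q : ℂ × ℂ ↦ zetaTerm (latticePoint q.1 p) q.2) (zetaTermFDeriv p q) q := by
  have hω : HasFDerivAt (fun q : ℂ × ℂ ↦ latticePoint q.1 p) ((p.2 : ℂ) • .fst ℂ ℂ ℂ) q :=
    (hasFDerivAt_fst.const_mul (p.2 : ℂ)).const_add (p.1 : ℂ)
  refine (hasFDerivAt_zetaTerm hω hasFDerivAt_snd h0 h1).congr_fderiv ?_
  rw [zetaTermFDeriv, smul_smul, mul_comm]

lemma norm_zetaTermFDeriv_le {p : ℤ × ℤ} {q : ℂ × ℂ} {c : ℝ} (hp : p ≠ 0) (hc : 0 < c)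
    (hω : c * ‖p‖ ≤ ‖latticePoint q.1 p‖) (hzω : c * ‖p‖ ≤ ‖q.2 - latticePoint q.1 p‖) :
    ‖zetaTermFDeriv p q‖ ≤
      (3 * ‖q.2‖ ^ 2 / c ^ 4 + 2 * ‖q.2‖ / c ^ 3) * (‖p‖ ^ 3)⁻¹ := by
  have hp' := norm_pos_iff.mpr hp
  calc ‖zetaTermFDeriv p q‖
      ≤ ‖p.2 * zetaTermDeriv (latticePoint q.1 p) q.2‖ * 1 +
        ‖(q.2 - latticePoint q.1 p)⁻¹ ^ 2 - (latticePoint q.1 p)⁻¹ ^ 2‖ * 1 := by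
        refine (norm_sub_le _ _).trans ?_
        rw [norm_smul, norm_smul]
        gcongr
        · exact ContinuousLinearMap.norm_fst_le ..
        · exact ContinuousLinearMap.norm_snd_le ..
    _ ≤ 3 * ‖q.2‖ ^ 2 / c ^ 4 * (‖p‖ ^ 3)⁻¹ * 1 + 2 * ‖q.2‖ / (c * ‖p‖) ^ 3 * 1 := by
        gcongr
        · exact norm_snd_mul_zetaTermDeriv_le hp hc hω hzω
        · exact norm_inv_sq_sub_inv_sq_le (mul_pos hc hp') hω hzω
    _ = _ := by field_simp

lemma hasSum_zetaTermFDeriv (hz : ∀ p ≠ 0, latticePoint τ p ≠ z) :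
    HasSum (fun p : {p : ℤ × ℤ // p ≠ 0} ↦ zetaTermFDeriv p (τ, z))
      (zetaTau τ z • .fst ℂ ℂ ℂ - (periodPair τ).weierstrassPExcept 0 z • .snd ℂ ℂ ℂ) :=
  ((summable_snd_mul_zetaTermDeriv hz).hasSum.smul_const _).sub
    ((hasSum_weierstrassPExcept_zero τ z).smul_const _)

theorem hasFDerivAt_zetaReg (hz : ∀ p ≠ 0, latticePoint τ p ≠ z) :
    HasFDerivAt (fun q : ℂ × ℂ ↦ zetaReg q.1 q.2)
      (zetaTau τ z • .fst ℂ ℂ ℂ - (periodPair τ).weierstrassPExcept 0 z • .snd ℂ ℂ ℂ)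
      ((τ : ℂ), z) := by
  obtain ⟨c, hc, h⟩ := exists_eventually_mul_norm_le hz
  have hM : ∀ᶠ q in 𝓝 ((τ : ℂ), z), ‖q.2‖ ≤ ‖z‖ + 1 :=
    (continuous_snd.norm.tendsto _).eventually_le_const (lt_add_one _)
  obtain ⟨r, hr, hball⟩ := Metric.eventually_nhds_iff_ball.mp (h.and hM)
  have hq0 := Metric.mem_ball_self (x := ((τ : ℂ), z)) hr
  rw [← (hasSum_zetaTermFDeriv hz).tsum_eq]
  refine hasFDerivAt_tsum_of_isPreconnected (summable_norm_pow_three_inv.mul_left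
    (3 * (‖z‖ + 1) ^ 2 / c ^ 4 + 2 * (‖z‖ + 1) / c ^ 3)) Metric.isOpen_ball
    Metric.isPreconnected_ball (fun p q hq ↦ ?_) (fun p q hq ↦ ?_) hq0 (summable_zetaTerm hz) hq0
  · have hp := mul_pos hc (norm_pos_iff.mpr p.2)
    obtain ⟨h1, h2⟩ := (hball q hq).1 p p.2
    exact hasFDerivAt_zetaTerm_latticePoint (norm_pos_iff.mp (hp.trans_le h1))
      (norm_pos_iff.mp (hp.trans_le h2))
  · obtain ⟨h1, h2⟩ := (hball q hq).1 p p.2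
    refine (norm_zetaTermFDeriv_le p.2 hc h1 h2).trans ?_
    gcongr <;> exact (hball q hq).2

lemma hasDerivAt_zetaReg (hz : ∀ p ≠ 0, latticePoint τ p ≠ z) :
    HasDerivAt (zetaReg τ) (-(periodPair τ).weierstrassPExcept 0 z) z := by
  simpa [Function.comp_def] using (hasFDerivAt_zetaReg hz).comp_hasDerivAt z
    ((hasDerivAt_const z (τ : ℂ)).prodMk (hasDerivAt_id z))

lemma tendsto_zetaReg (τ : ℍ) : Tendsto (zetaReg τ) (𝓝 0) (𝓝 0) := by
  simpa [zetaReg_zero] using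
    (hasDerivAt_zetaReg fun p hp ↦ latticePoint_ne_zero τ hp).continuousAt.tendsto

theorem hasFDerivAt_zetaSeries (hz : z ∉ (periodPair τ).lattice) :
    HasFDerivAt (fun q : ℂ × ℂ ↦ zetaSeries q.1 q.2)
      (zetaTau τ z • .fst ℂ ℂ ℂ - wp τ z • .snd ℂ ℂ ℂ) ((τ : ℂ), z) := by
  have hz0 : z ≠ 0 := ne_of_mem_of_not_mem (zero_mem _) hz |>.symm
  refine (((hasDerivAt_inv hz0).comp_hasFDerivAt ((τ : ℂ), z) hasFDerivAt_snd).add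
    (hasFDerivAt_zetaReg fun p _ ↦ latticePoint_ne hz p)).congr_fderiv ?_
  rw [wp_eq_add, inv_pow]
  module

lemma hasDerivAt_zetaSeries (hz : z ∉ (periodPair τ).lattice) :
    HasDerivAt (zetaSeries τ) (-wp τ z) z := by
  simpa [Function.comp_def] using (hasFDerivAt_zetaSeries hz).comp_hasDerivAt z
    ((hasDerivAt_const z (τ : ℂ)).prodMk (hasDerivAt_id z))

lemma hasDerivAt_zetaSeries_tau (hz : z ∉ (periodPair τ).lattice) :
    HasDerivAt (fun t ↦ zetaSeries t z) (zetaTau τ z) τ := by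
  simpa [Function.comp_def] using (hasFDerivAt_zetaSeries hz).comp_hasDerivAt (τ : ℂ)
    ((hasDerivAt_id (τ : ℂ)).prodMk (hasDerivAt_const (τ : ℂ) z))

lemma hasDerivAt_zetaSeries_add (hz : z + τ ∉ (periodPair τ).lattice) :
    HasDerivAt (fun t ↦ zetaSeries t (z + t)) (zetaTau τ (z + τ) - wp τ (z + τ)) τ := by
  simpa [Function.comp_def] using (hasFDerivAt_zetaSeries hz).comp_hasDerivAt (τ : ℂ)
    ((hasDerivAt_id (τ : ℂ)).prodMk ((hasDerivAt_id (τ : ℂ)).const_add z))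

lemma differentiableAt_zetaTau (hz : ∀ p ≠ 0, latticePoint τ p ≠ z) :
    DifferentiableAt ℂ (zetaTau τ) z := by
  obtain ⟨c, hc, h⟩ := exists_eventually_mul_norm_le hz
  have hM : ∀ᶠ w in 𝓝 z, ‖w‖ ≤ ‖z‖ + 1 :=
    (continuous_norm.tendsto _).eventually_le_const (lt_add_one _)
  have hτ : Tendsto (fun w ↦ ((τ : ℂ), w)) (𝓝 z) (𝓝 ((τ : ℂ), z)) :=
    (Continuous.prodMk_right _).tendsto z
  obtain ⟨r, hr, hball⟩ := Metric.eventually_nhds_iff_ball.mp ((hτ.eventually h).and hM)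
  refine (differentiableOn_tsum_of_summable_norm (summable_norm_pow_three_inv.mul_left
    (3 * (‖z‖ + 1) ^ 2 / c ^ 4)) (fun p w hw ↦ ?_) Metric.isOpen_ball
    fun p w hw ↦ ?_).differentiableAt (Metric.ball_mem_nhds z hr)
  · have h2 := norm_pos_iff.mp
      ((mul_pos hc (norm_pos_iff.mpr p.2)).trans_le ((hball w hw).1 p p.2).2)
    unfold zetaTermDeriv
    exact DifferentiableAt.differentiableWithinAt (by fun_prop (disch := exact h2))
  · obtain ⟨h1, h2⟩ := (hball w hw).1 p p.2
    refine (norm_snd_mul_zetaTermDeriv_le p.2 hc h1 h2).trans ?_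
    gcongr
    exact (hball w hw).2

lemma zetaTau_isBigO (τ : ℍ) : zetaTau τ =O[𝓝 0] fun z ↦ z ^ 2 := by
  obtain ⟨c, hc, h⟩ :=
    exists_eventually_mul_norm_le (τ := τ) (z := 0) fun p hp ↦ latticePoint_ne_zero τ hp
  have hτ : Tendsto (fun w : ℂ ↦ ((τ : ℂ), w)) (𝓝 0) (𝓝 ((τ : ℂ), 0)) :=
    (Continuous.prodMk_right _).tendsto 0
  refine .of_bound (3 / c ^ 4 * ∑' p : {p : ℤ × ℤ // p ≠ 0}, (‖p.1‖ ^ 3)⁻¹) ?_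
  filter_upwards [hτ.eventually h] with z hz
  calc ‖zetaTau τ z‖ ≤ 3 * ‖z‖ ^ 2 / c ^ 4 * ∑' p : {p : ℤ × ℤ // p ≠ 0}, (‖p.1‖ ^ 3)⁻¹ :=
        tsum_of_norm_bounded (summable_norm_pow_three_inv.hasSum.mul_left _) fun p ↦
          norm_snd_mul_zetaTermDeriv_le p.2 hc (hz p p.2).1 (hz p p.2).2
    _ = _ := by rw [norm_pow]; ring

end ZetaSeries

section Uniqueness

variable {τ : ℍ} {z : ℂ}

lemma IsWeierstrassZeta.eq_zetaSeries {zeta : ℂ → ℂ → ℂ} (h : IsWeierstrassZeta zeta)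
    (hz : z ∉ (periodPair τ).lattice) : zeta τ z = zetaSeries τ z := by
  set L := periodPair τ
  obtain ⟨-, hd, hlim⟩ := h τ τ.im_pos
  have hderiv (w : ℂ) (hw : w ∉ L.lattice) : HasDerivAt (zeta τ - zetaSeries τ) 0 w := by
    simpa using (hd w (inLattice_iff_mem_lattice.not.mpr hw)).sub (hasDerivAt_zetaSeries hw)
  obtain ⟨c, hc⟩ := L.isClosed_lattice.isOpen_compl.exists_is_const_of_deriv_eq_zero
    (isPreconnected_compl_lattice L)
    (fun w hw ↦ (hderiv w hw).differentiableAt.differentiableWithinAt)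
    (fun w hw ↦ (hderiv w hw).deriv)
  have hlim' : Tendsto (zeta τ - zetaSeries τ) (𝓝[≠] 0) (𝓝 0) := by
    have h0 : Tendsto (zetaReg τ) (𝓝[≠] 0) (𝓝 0) := (tendsto_zetaReg τ).mono_left inf_le_left
    simpa [zetaSeries, sub_sub, Pi.sub_def] using hlim.sub h0
  have hc0 : c = 0 := tendsto_nhds_unique
    (tendsto_const_nhds.congr' ((eventually_nhdsNE_notMem L.lattice 0).mono fun w hw ↦
      (hc w hw).symm)) hlim'
  exact sub_eq_zero.mp ((hc z hz).trans hc0)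

lemma eventually_exists_coe_eq_and_notMem_lattice (hz : z ∉ (periodPair τ).lattice) :
    ∀ᶠ t in 𝓝 (τ : ℂ), ∃ σ : ℍ, ↑σ = t ∧ z ∉ (periodPair σ).lattice := by
  obtain ⟨c, hc, h⟩ := exists_eventually_mul_norm_le fun p _ ↦ latticePoint_ne hz p
  have hτ : Tendsto (fun t : ℂ ↦ (t, z)) (𝓝 τ) (𝓝 ((τ : ℂ), z)) :=
    (Continuous.prodMk_left _).tendsto _
  filter_upwards [hτ.eventually h, continuous_im.continuousAt.eventually_const_lt τ.im_pos]
    with t ht him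
  refine ⟨⟨t, him⟩, rfl, fun hzt ↦ ?_⟩
  obtain ⟨p, rfl⟩ := mem_lattice_iff_exists_latticePoint.mp hzt
  obtain rfl : p = 0 := by
    by_contra hp
    exact (mul_pos hc (norm_pos_iff.mpr hp)).not_ge (by simpa using (ht p hp).2)
  exact latticePoint_ne hz 0 (by simp [latticePoint])

end Uniqueness

section QuasiPeriodsOfZeta

lemma tendsto_inv_sub_intCast_mul {𝕜 : Type*} [RCLike 𝕜] (c : 𝕜) {d : 𝕜} (hd : d ≠ 0) :
    Tendsto (fun k : ℤ ↦ (c - k * d)⁻¹) cofinite (𝓝 0) := by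
  rw [Int.cofinite_eq]
  exact tendsto_inv₀_cobounded.comp ((tendsto_const_sub_cobounded c).comp
    ((tendsto_mul_right_cobounded hd).comp tendsto_intCast_atBot_sup_atTop_cobounded))

lemma tsum_sub_shift_add {E : Type*} [AddCommGroup E] [TopologicalSpace E]
    [IsTopologicalAddGroup E] [T2Space E] {f g : ℤ → E} (hf : Tendsto f cofinite (𝓝 0))
    (hg : Summable g) (hfg : Summable fun k ↦ f k - f (k + 1) + g k) :
    ∑' k, (f k - f (k + 1) + g k) = ∑' k, g k := by
  have hs : Summable fun k ↦ f k - f (k + 1) := by simpa using hfg.sub hg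
  suffices HasSum (fun k ↦ f k - f (k + 1)) 0 (SummationFilter.symmetricIco ℤ) by
    rw [hs.tsum_add hg, add_eq_right,
      ← tsum_eq_of_summable_unconditional (L := SummationFilter.symmetricIco ℤ) hs, this.tsum_eq]
  have htop : Tendsto (fun N : ℕ ↦ (N : ℤ)) atTop cofinite :=
    Nat.cofinite_eq_atTop ▸ Nat.cast_injective.tendsto_cofinite
  have hlim := (hf.comp (neg_injective.tendsto_cofinite.comp htop)).sub (hf.comp htop)
  rw [SummationFilter.hasSum_symmetricIco_int_iff]
  simpa only [Finset.sum_Ico_int_sub, sub_zero, Function.comp_def] using hlim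

variable {τ : ℍ} {z l : ℂ}

lemma one_mem_lattice (τ : ℍ) : 1 ∈ (periodPair τ).lattice := (periodPair τ).ω₁_mem_lattice

lemma coe_mem_lattice (τ : ℍ) : (τ : ℂ) ∈ (periodPair τ).lattice := (periodPair τ).ω₂_mem_lattice

lemma hasSum_zetaTerm (hz : z ∉ (periodPair τ).lattice) :
    HasSum (fun p ↦ zetaTerm (latticePoint τ p) z) (zetaSeries τ z) := by
  have hreg : HasSum (fun p : {p : ℤ × ℤ // p ≠ 0} ↦ zetaTerm (latticePoint τ p) z) (zetaReg τ z) :=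
    (summable_zetaTerm fun p _ ↦ latticePoint_ne hz p).hasSum
  refine ((hasSum_pi_single (0 : ℤ × ℤ) z⁻¹).add ((hasSum_subtype_iff_indicator
    (s := {p : ℤ × ℤ | p ≠ 0}) (f := fun p ↦ zetaTerm (latticePoint τ p) z)).mp hreg)).congr_fun
    fun p ↦ ?_
  by_cases hp : p = 0 <;> simp [hp, zetaTerm, latticePoint]

lemma hasSum_zetaSeries_add_sub (hl : l ∈ (periodPair τ).lattice)
    (hz : z ∉ (periodPair τ).lattice) :
    HasSum (fun p ↦ (z + l - latticePoint τ p)⁻¹ - (z - latticePoint τ p)⁻¹ +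
      l * (latticePoint τ p)⁻¹ ^ 2) (zetaSeries τ (z + l) - zetaSeries τ z) := by
  refine ((hasSum_zetaTerm ((add_mem_cancel_right hl).not.mpr hz)).sub
    (hasSum_zetaTerm hz)).congr_fun fun p ↦ ?_
  simp only [zetaTerm]
  ring

open EisensteinSeries

lemma tsum_row_zetaSeries_add_one_sub (hz : z ∉ (periodPair τ).lattice) (n : ℤ) :
    ∑' m : ℤ, ((z + 1 - latticePoint τ (m, n))⁻¹ - (z - latticePoint τ (m, n))⁻¹ +
      1 * (latticePoint τ (m, n))⁻¹ ^ 2) = e2Summand n τ := by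
  have hs := ((Equiv.prodComm ℤ ℤ).summable_iff.mpr
    (hasSum_zetaSeries_add_sub (one_mem_lattice τ) hz).summable).prod_factor n
  have hg : Summable fun m : ℤ ↦ 1 * (latticePoint τ (m, n))⁻¹ ^ 2 :=
    (linear_right_summable τ n le_rfl).congr fun m ↦ by
      rw [one_mul, latticePoint, inv_pow, add_comm, zpow_ofNat]
  have hf := tendsto_inv_sub_intCast_mul (z + 1 - n * τ) one_ne_zero
  have hstep (m : ℤ) : z + 1 - n * τ - (m + 1 : ℤ) * 1 = z - latticePoint τ (m, n) := by
    simp only [latticePoint]; push_cast; ring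
  have hterm (m : ℤ) : z + 1 - n * τ - m * 1 = z + 1 - latticePoint τ (m, n) := by
    simp only [latticePoint]; ring
  have key := tsum_sub_shift_add hf hg (by simp only [hstep, hterm]; exact hs)
  simp only [hstep, hterm] at key
  rw [key, e2Summand]
  simp [eisSummand, latticePoint, add_comm]

lemma tsum_row_zetaSeries_add_tau_sub (hz : z ∉ (periodPair τ).lattice) (m : ℤ) :
    ∑' n : ℤ, ((z + τ - latticePoint τ (m, n))⁻¹ - (z - latticePoint τ (m, n))⁻¹ +
      τ * (latticePoint τ (m, n))⁻¹ ^ 2) = τ * ∑' n : ℤ, 1 / ((n : ℂ) * τ + m) ^ 2 := by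
  have hs := (hasSum_zetaSeries_add_sub (coe_mem_lattice τ) hz).summable.prod_factor m
  have hg : Summable fun n : ℤ ↦ τ * (latticePoint τ (m, n))⁻¹ ^ 2 :=
    ((linear_left_summable τ.ne_zero m le_rfl).congr fun n ↦ by
      rw [latticePoint, inv_pow, add_comm, zpow_ofNat]).mul_left (τ : ℂ)
  have hf := tendsto_inv_sub_intCast_mul (z + τ - m) τ.ne_zero
  have hstep (n : ℤ) : z + τ - m - (n + 1 : ℤ) * τ = z - latticePoint τ (m, n) := by
    simp only [latticePoint]; push_cast; ring
  have hterm (n : ℤ) : z + τ - m - n * τ = z + τ - latticePoint τ (m, n) := by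
    simp only [latticePoint]; ring
  have key := tsum_sub_shift_add hf hg (by simp only [hstep, hterm]; exact hs)
  simp only [hstep, hterm] at key
  rw [key, tsum_mul_left]
  simp [latticePoint, add_comm]

theorem zetaSeries_add_one_sub (hz : z ∉ (periodPair τ).lattice) :
    zetaSeries τ (z + 1) - zetaSeries τ z = G2 τ := by
  have h := (Equiv.prodComm ℤ ℤ).hasSum_iff.mpr
    (hasSum_zetaSeries_add_sub (one_mem_lattice τ) hz)
  rw [← h.tsum_eq, h.summable.tsum_prod,
    ← tsum_eq_of_summable_unconditional (L := SummationFilter.symmetricIco ℤ) h.summable.prod,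
    G2_eq_tsum_symmetricIco]
  exact tsum_congr (tsum_row_zetaSeries_add_one_sub hz)

theorem zetaSeries_add_tau_sub (hz : z ∉ (periodPair τ).lattice) :
    zetaSeries τ (z + τ) - zetaSeries τ z = τ * G2 τ - 2 * Real.pi * I := by
  have h := hasSum_zetaSeries_add_sub (coe_mem_lattice τ) hz
  have hτ := τ.ne_zero
  rw [← h.tsum_eq, h.summable.tsum_prod,
    ← tsum_eq_of_summable_unconditional (L := SummationFilter.symmetricIco ℤ) h.summable.prod,
    G2_S_transform τ, ← tsum_symmetricIco_tsum_eq_S_act τ]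
  simp only [tsum_row_zetaSeries_add_tau_sub hz, tsum_mul_left]
  field_simp
  ring

lemma zetaTau_add_one_sub (hz : z ∉ (periodPair τ).lattice) :
    zetaTau τ (z + 1) - zetaTau τ z = deriv (fun t ↦ G2 (UpperHalfPlane.ofComplex t)) τ := by
  have hz1 := (add_mem_cancel_right (one_mem_lattice τ)).not.mpr hz
  refine (((hasDerivAt_zetaSeries_tau hz1).sub
    (hasDerivAt_zetaSeries_tau hz)).congr_of_eventuallyEq ?_).deriv.symm
  filter_upwards [eventually_exists_coe_eq_and_notMem_lattice hz]
  rintro _ ⟨σ, rfl, hσ⟩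
  rw [UpperHalfPlane.ofComplex_apply, ← zetaSeries_add_one_sub hσ]
  rfl

lemma zetaTau_add_tau_sub (hz : z ∉ (periodPair τ).lattice) :
    zetaTau τ (z + τ) - wp τ (z + τ) - zetaTau τ z =
      deriv (fun t ↦ t * G2 (UpperHalfPlane.ofComplex t) - 2 * Real.pi * I) τ := by
  have hzτ := (add_mem_cancel_right (coe_mem_lattice τ)).not.mpr hz
  refine (((hasDerivAt_zetaSeries_add hzτ).sub
    (hasDerivAt_zetaSeries_tau hz)).congr_of_eventuallyEq ?_).deriv.symm
  filter_upwards [eventually_exists_coe_eq_and_notMem_lattice hz]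
  rintro _ ⟨σ, rfl, hσ⟩
  rw [UpperHalfPlane.ofComplex_apply, ← zetaSeries_add_tau_sub hσ]
  rfl

end QuasiPeriodsOfZeta

section Expansions

lemma isLittleO_pow_succ_of_deriv {𝕜 E : Type*} [RCLike 𝕜] [NormedAddCommGroup E]
    [NormedSpace 𝕜 E] {f f' : 𝕜 → E} {k : ℕ} (h0 : f 0 = 0)
    (hf : ∀ᶠ z in 𝓝 0, HasDerivAt f (f' z) z) (hf' : f' =o[𝓝 0] fun z ↦ z ^ k) :
    f =o[𝓝 0] fun z ↦ z ^ (k + 1) := by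
  obtain ⟨r, hr, hball⟩ := Metric.eventually_nhds_iff_ball.mp hf
  have hnhds : 𝓝[Metric.ball 0 r] (0 : 𝕜) = 𝓝 0 := Metric.isOpen_ball.nhdsWithin_eq (by simpa)
  have h := (convex_ball (0 : 𝕜) r).isLittleO_pow_succ (x₀ := 0) (n := k) (by simpa)
    (fun z hz ↦ (hball z hz).hasFDerivAt.hasFDerivWithinAt)
    (.of_norm_left (by simpa [hnhds, ← norm_pow] using hf'.norm_norm))
  simpa [h0, hnhds, ← norm_pow] using h

lemma isLittleO_mul_inv_pow {𝕜 : Type*} [NormedField 𝕜] {f : 𝕜 → 𝕜} {n : ℕ}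
    (hf : f =o[𝓝 0] fun z ↦ z ^ (n + 1)) : (fun z ↦ f z * z⁻¹ ^ n) =o[𝓝[≠] 0] fun z ↦ z := by
  refine ((hf.mono nhdsWithin_le_nhds).mul_isBigO
    (isBigO_refl (fun z : 𝕜 ↦ z⁻¹ ^ n) (𝓝[≠] 0))).congr' .rfl ?_
  filter_upwards [self_mem_nhdsWithin] with z (hz : z ≠ 0)
  rw [inv_pow, pow_succ', mul_assoc, mul_inv_cancel₀ (pow_ne_zero n hz), mul_one]

lemma isLittleO_id_of_sub_mul_pow {𝕜 : Type*} [NormedField 𝕜] {f : 𝕜 → 𝕜} {a : 𝕜} {n : ℕ}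
    (hn : 1 < n) (hf : (fun z ↦ f z - a * z ^ n) =o[𝓝 0] fun z ↦ z ^ n) :
    f =o[𝓝 0] fun z ↦ z := by
  have hpow : (fun z : 𝕜 ↦ z ^ n) =o[𝓝 0] fun z ↦ z := by
    simpa using isLittleO_pow_pow (𝕜 := 𝕜) hn
  simpa using (hf.trans hpow).add (hpow.const_mul_left a)

lemma hasDerivAt_weierstrassPExcept_zero (L : PeriodPair) :
    ∀ᶠ z in 𝓝 0, HasDerivAt (L.weierstrassPExcept 0) (L.derivWeierstrassPExcept 0 z) z := by
  filter_upwards [L.compl_lattice_sdiff_singleton_mem_nhds 0] with z hz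
  rw [← L.eqOn_deriv_weierstrassPExcept_derivWeierstrassPExcept 0 hz]
  exact ((L.differentiableOn_weierstrassPExcept 0).differentiableAt
    (L.isOpen_compl_lattice_sdiff.mem_nhds hz)).hasDerivAt

lemma derivWeierstrassPExcept_zero_isLittleO (L : PeriodPair) :
    (fun z ↦ L.derivWeierstrassPExcept 0 z - 6 * L.G 4 * z) =o[𝓝 0] fun z ↦ z ^ 1 := by
  have h := (L.analyticAt_derivWeierstrassPExcept 0).differentiableAt.hasDerivAt.isLittleO
  rw [L.deriv_derivWeierstrassPExcept_self, PeriodPair.sumInvPow_zero] at h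
  simpa [mul_comm] using h

lemma weierstrassPExcept_zero_isLittleO (L : PeriodPair) :
    (fun z ↦ L.weierstrassPExcept 0 z - 3 * L.G 4 * z ^ 2) =o[𝓝 0] fun z ↦ z ^ 2 := by
  refine isLittleO_pow_succ_of_deriv (by simp) ?_ (derivWeierstrassPExcept_zero_isLittleO L)
  filter_upwards [hasDerivAt_weierstrassPExcept_zero L] with z hz
  refine (hz.sub ((hasDerivAt_pow 2 z).const_mul (3 * L.G 4))).congr_deriv ?_
  push_cast
  ring

lemma zetaReg_isLittleO (τ : ℍ) :
    (fun z ↦ zetaReg τ z - -(periodPair τ).G 4 * z ^ 3) =o[𝓝 0] fun z ↦ z ^ 3 := by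
  set L := periodPair τ
  refine isLittleO_pow_succ_of_deriv (by simp [zetaReg_zero]) ?_
    (weierstrassPExcept_zero_isLittleO L).neg_left
  filter_upwards [L.compl_lattice_sdiff_singleton_mem_nhds 0] with z hz
  have hz' (p : ℤ × ℤ) (hp : p ≠ 0) : latticePoint τ p ≠ z := by
    rintro rfl
    exact hz ⟨latticePoint_mem_lattice τ p, latticePoint_ne_zero τ hp⟩
  refine ((hasDerivAt_zetaReg hz').sub ((hasDerivAt_pow 3 z).const_mul (-L.G 4))).congr_deriv ?_
  push_cast
  ring

end Expansions

section Formula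

open EisensteinSeries

/-- The closed form of the `τ`-derivative of the Weierstrass zeta function. The quasi-period `η₁`
enters as the Eisenstein series `G2`, see `zetaSeries_add_one_sub`. -/
noncomputable def zetaTauFormula (τ : ℍ) (z : ℂ) : ℂ :=
  (I / (4 * (Real.pi : ℂ))) *
    (wpd τ z + 2 * (zetaSeries τ z - z * G2 τ) * wp τ z
      + 2 * G2 τ * zetaSeries τ z - (1 / 6) * z * g2 τ)

variable {τ : ℍ} {z : ℂ}

lemma wp_add {l : ℂ} (hl : l ∈ (periodPair τ).lattice) (z : ℂ) : wp τ (z + l) = wp τ z := by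
  rw [wp_eq_weierstrassP]
  exact (periodPair τ).weierstrassP_add_coe z ⟨l, hl⟩

lemma wpd_add {l : ℂ} (hl : l ∈ (periodPair τ).lattice) (z : ℂ) : wpd τ (z + l) = wpd τ z := by
  rw [wpd_eq_derivWeierstrassP]
  exact (periodPair τ).derivWeierstrassP_add_coe z ⟨l, hl⟩

lemma zetaTauFormula_add_one (hz : z ∉ (periodPair τ).lattice) :
    zetaTauFormula τ (z + 1) = zetaTauFormula τ z +
      (I / (4 * (Real.pi : ℂ))) * (2 * G2 τ ^ 2 - (1 / 6) * g2 τ) := by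
  simp only [zetaTauFormula, wp_add (one_mem_lattice τ), wpd_add (one_mem_lattice τ),
    eq_add_of_sub_eq (zetaSeries_add_one_sub hz)]
  ring

lemma zetaTauFormula_add_tau (hz : z ∉ (periodPair τ).lattice) :
    zetaTauFormula τ (z + τ) = zetaTauFormula τ z + wp τ (z + τ) + (I / (4 * (Real.pi : ℂ))) *
      (2 * G2 τ * (τ * G2 τ - 2 * Real.pi * I) - (1 / 6) * τ * g2 τ) := by
  have hc : (I / (4 * (Real.pi : ℂ))) * (-4 * Real.pi * I) = 1 := by
    field_simp
    simp
  simp only [zetaTauFormula, wp_add (coe_mem_lattice τ), wpd_add (coe_mem_lattice τ),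
    eq_add_of_sub_eq (zetaSeries_add_tau_sub hz)]
  linear_combination wp τ z * hc

theorem lattice_le_quasiPeriods_zetaTau_sub_formula (τ : ℍ) :
    (periodPair τ).lattice ≤
      quasiPeriods (periodPair τ).lattice fun z ↦ zetaTau τ z - zetaTauFormula τ z := by
  refine Submodule.span_le.mpr ?_
  rintro l (rfl | rfl)
  · refine ⟨one_mem_lattice τ, deriv (fun t ↦ G2 (UpperHalfPlane.ofComplex t)) τ -
      (I / (4 * (Real.pi : ℂ))) * (2 * G2 τ ^ 2 - (1 / 6) * g2 τ), fun z hz ↦ ?_⟩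
    change zetaTau τ (z + 1) - zetaTauFormula τ (z + 1) = _
    linear_combination zetaTau_add_one_sub hz - zetaTauFormula_add_one hz
  · refine ⟨coe_mem_lattice τ,
      deriv (fun t ↦ t * G2 (UpperHalfPlane.ofComplex t) - 2 * Real.pi * I) τ -
      (I / (4 * (Real.pi : ℂ))) * (2 * G2 τ * (τ * G2 τ - 2 * Real.pi * I) -
        (1 / 6) * τ * g2 τ), fun z hz ↦ ?_⟩
    change zetaTau τ (z + τ) - zetaTauFormula τ (z + τ) = _
    linear_combination zetaTau_add_tau_sub hz - zetaTauFormula_add_tau hz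

lemma differentiableAt_zetaTauFormula (hz : z ∉ (periodPair τ).lattice) :
    DifferentiableAt ℂ (zetaTauFormula τ) z := by
  have hnhds := (periodPair τ).isClosed_lattice.isOpen_compl.mem_nhds hz
  have hζ := (hasDerivAt_zetaSeries hz).differentiableAt
  have hwp : DifferentiableAt ℂ (wp τ) z :=
    wp_eq_weierstrassP τ ▸ (periodPair τ).differentiableOn_weierstrassP.differentiableAt hnhds
  have hwpd : DifferentiableAt ℂ (wpd τ) z := wpd_eq_derivWeierstrassP τ ▸
    (periodPair τ).differentiableOn_derivWeierstrassP.differentiableAt hnhds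
  unfold zetaTauFormula
  fun_prop

-- In the bracket the poles cancel, and so do the linear terms: `℘′` contributes `6 G₄ z`, the
-- product `2 ζ ℘` contributes `6 G₄ z - 2 G₄ z`, and `-g₂ z / 6` is `-10 G₄ z`.
theorem zetaTauFormula_isLittleO (τ : ℍ) : zetaTauFormula τ =o[𝓝[≠] 0] fun z ↦ z := by
  set L := periodPair τ
  have hP' := isLittleO_mul_inv_pow (n := 0) (derivWeierstrassPExcept_zero_isLittleO L)
  have hP := isLittleO_mul_inv_pow (n := 1) (weierstrassPExcept_zero_isLittleO L)
  have hζ := isLittleO_mul_inv_pow (n := 2) (zetaReg_isLittleO τ)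
  have hζ0 : zetaReg τ =o[𝓝[≠] 0] fun z ↦ z :=
    (isLittleO_id_of_sub_mul_pow (by norm_num) (zetaReg_isLittleO τ)).mono nhdsWithin_le_nhds
  have hbdd : (fun z ↦ zetaReg τ z - G2 τ * z) =O[𝓝[≠] 0] fun _ ↦ (1 : ℂ) :=
    (((tendsto_zetaReg τ).sub (tendsto_id.const_mul (G2 τ))).mono_left
      nhdsWithin_le_nhds).isBigO_one ℂ
  have hprod : (fun z ↦ (zetaReg τ z - G2 τ * z) * L.weierstrassPExcept 0 z)
      =o[𝓝[≠] 0] fun z ↦ z := by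
    simpa using hbdd.mul_isLittleO ((isLittleO_id_of_sub_mul_pow one_lt_two
      (weierstrassPExcept_zero_isLittleO L)).mono nhdsWithin_le_nhds)
  refine (((((hP'.add (hP.const_mul_left 2)).add (hζ.const_mul_left 2)).add
    (hprod.const_mul_left 2)).add (hζ0.const_mul_left (2 * G2 τ))).const_mul_left
      (I / (4 * (Real.pi : ℂ)))).congr' ?_ .rfl
  filter_upwards [self_mem_nhdsWithin] with z (hz : z ≠ 0)
  have hwpd : wpd τ z = L.derivWeierstrassPExcept 0 z - 2 / z ^ 3 := by
    simpa [wpd_eq_derivWeierstrassP τ] using (L.derivWeierstrassPExcept_sub 0 z).symm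
  rw [zetaTauFormula, hwpd, wp_eq_add, g2_eq_g₂, PeriodPair.g₂, zetaSeries]
  field_simp
  ring

theorem zetaTau_eq_zetaTauFormula (hz : z ∉ (periodPair τ).lattice) :
    zetaTau τ z = zetaTauFormula τ z := by
  have hdiff : DifferentiableOn ℂ (fun z ↦ zetaTau τ z - zetaTauFormula τ z)
      ((periodPair τ).lattice : Set ℂ)ᶜ := fun w hw ↦
    ((differentiableAt_zetaTau fun p _ ↦ latticePoint_ne hw p).sub
      (differentiableAt_zetaTauFormula hw)).differentiableWithinAt
  have hτ : zetaTau τ =o[𝓝[≠] 0] fun z ↦ z := by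
    have hpow : (fun z : ℂ ↦ z ^ 2) =o[𝓝 0] fun z ↦ z := by
      simpa using isLittleO_pow_pow (𝕜 := ℂ) one_lt_two
    exact ((zetaTau_isBigO τ).trans_isLittleO hpow).mono nhdsWithin_le_nhds
  exact sub_eq_zero.mp (eq_zero_of_le_quasiPeriods_of_isLittleO hdiff
    (lattice_le_quasiPeriods_zetaTau_sub_formula τ) (hτ.sub (zetaTauFormula_isLittleO τ)) hz)

end Formula

/-- Lemma 2.3 (ii): the `τ`-derivative of `ζ(z|τ)`. -/
theorem tau_deriv_zeta
    (zeta : ℂ → ℂ → ℂ) (eta1 : ℂ → ℂ)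
    (hzeta : IsWeierstrassZeta zeta) (heta1 : IsEta1 zeta eta1) :
    ∀ τ : ℂ, 0 < τ.im → ∀ z : ℂ, ¬ InLattice τ z →
    HasDerivAt (fun t => zeta t z)
      ((Complex.I / (4 * (Real.pi : ℂ))) *
        (wpd τ z + 2 * (zeta τ z - z * eta1 τ) * wp τ z
          + 2 * eta1 τ * zeta τ z - (1 / 6) * z * g2 τ)) τ := by
  intro τ hτ z hz
  lift τ to ℍ using hτ
  have hzL := inLattice_iff_mem_lattice.not.mp hz
  have hη : eta1 τ = EisensteinSeries.G2 τ := by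
    rw [heta1 τ τ.im_pos z hz, hzeta.eq_zetaSeries hzL,
      hzeta.eq_zetaSeries ((add_mem_cancel_right (one_mem_lattice τ)).not.mpr hzL),
      zetaSeries_add_one_sub hzL]
  have hzeta_eq : (fun t ↦ zeta t z) =ᶠ[𝓝 (τ : ℂ)] fun t ↦ zetaSeries t z := by
    filter_upwards [eventually_exists_coe_eq_and_notMem_lattice hzL]
    rintro _ ⟨σ, rfl, hσ⟩
    exact hzeta.eq_zetaSeries hσ
  rw [hη, hzeta.eq_zetaSeries hzL]
  exact ((hasDerivAt_zetaSeries_tau hzL).congr_deriv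
    (zetaTau_eq_zetaTauFormula hzL)).congr_of_eventuallyEq hzeta_eq
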